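/- For every n ≥ 1, the identity of polynomials in one variable x holds: Σ_{π ∈ B_n} x^{fdes(π)+1} = Σ_{k=0}^{n} C(n,k) · (Σ_{σ ∈ Q_k} x^{fap(σ)}) · (Σ_{σ ∈ Q_{n−k}} x^{2·lap(σ)}), where C(n,k) is the binomial coefficient. -/

import Mathlib

open Finset MvPolynomial

/-- Stirling permutations of order `n`, encoded as functions `Fin (2*n) → Fin (n+1)`
in one-line notation (position `i` holds the letter `σ (i) ∈ {1,…,n}`), such that each
letter `1,…,n` occurs exactly twice and all entries between the two occurrences of a
letter are larger than that letter. -/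
def StirlingSet (n : ℕ) : Finset (Fin (2*n) → Fin (n+1)) :=
  Finset.univ.filter (fun σ =>
    (∀ v : Fin (n+1), (v : ℕ) ≠ 0 →
        (Finset.univ.filter (fun i => σ i = v)).card = 2) ∧
    (∀ i j k : Fin (2*n), i < j → j < k → σ i = σ k → σ i < σ j))

/-- The letter at position `i ∈ {1,…,2n}` of a Stirling permutation, with the
convention that positions outside this range (in particular position `0`) hold `0`. -/
def sval {n : ℕ} (σ : Fin (2*n) → Fin (n+1)) (i : ℕ) : ℕ :=
  if h : 1 ≤ i ∧ i ≤ 2*n then (σ ⟨i - 1, by omega⟩ : ℕ) else 0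

/-- The number of ascent-plateaus: indices `2 ≤ i ≤ 2n-1` with `σ_{i-1} < σ_i = σ_{i+1}`. -/
def apQ {n : ℕ} (σ : Fin (2*n) → Fin (n+1)) : ℕ :=
  ((Finset.Icc 2 (2*n - 1)).filter
    (fun i => sval σ (i-1) < sval σ i ∧ sval σ i = sval σ (i+1))).card

/-- The number of left ascent-plateaus: indices `1 ≤ i ≤ 2n-1` with
`σ_{i-1} < σ_i = σ_{i+1}`, where `σ_0 = 0`. -/
def lapQ {n : ℕ} (σ : Fin (2*n) → Fin (n+1)) : ℕ :=
  ((Finset.Icc 1 (2*n - 1)).filter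
    (fun i => sval σ (i-1) < sval σ i ∧ sval σ i = sval σ (i+1))).card

/-- The number of double ascents: indices `1 ≤ i ≤ 2n-1` with
`σ_{i-1} < σ_i < σ_{i+1}`, where `σ_0 = 0`. -/
def dascQ {n : ℕ} (σ : Fin (2*n) → Fin (n+1)) : ℕ :=
  ((Finset.Icc 1 (2*n - 1)).filter
    (fun i => sval σ (i-1) < sval σ i ∧ sval σ i < sval σ (i+1))).card

/-- The number of descent-plateaus: indices `2 ≤ i ≤ 2n-1` with
`σ_{i-1} > σ_i = σ_{i+1}`. -/
def dpQ {n : ℕ} (σ : Fin (2*n) → Fin (n+1)) : ℕ :=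
  ((Finset.Icc 2 (2*n - 1)).filter
    (fun i => sval σ i < sval σ (i-1) ∧ sval σ i = sval σ (i+1))).card

/-- The number of ascents: indices `1 ≤ i ≤ 2n-1` with `σ_i < σ_{i+1}` or `i = 1`. -/
def ascQ {n : ℕ} (σ : Fin (2*n) → Fin (n+1)) : ℕ :=
  ((Finset.Icc 1 (2*n - 1)).filter
    (fun i => sval σ i < sval σ (i+1) ∨ i = 1)).card

/-- The number of plateaus: indices `1 ≤ i ≤ 2n-1` with `σ_i = σ_{i+1}`. -/
def platQ {n : ℕ} (σ : Fin (2*n) → Fin (n+1)) : ℕ :=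
  ((Finset.Icc 1 (2*n - 1)).filter (fun i => sval σ i = sval σ (i+1))).card

/-- The flag ascent-plateau number: `2·ap(σ)+1` if `σ_1 = σ_2`, and `2·ap(σ)` otherwise. -/
def fapQ {n : ℕ} (σ : Fin (2*n) → Fin (n+1)) : ℕ :=
  if 1 ≤ n ∧ sval σ 1 = sval σ 2 then 2 * apQ σ + 1 else 2 * apQ σ

/-- Signed permutations (the hyperoctahedral group `B_n`), encoded as a pair of a
permutation of `Fin n` and a sign vector; the one-line word is recovered by `bval`. -/
abbrev SignedPerm (n : ℕ) := Equiv.Perm (Fin n) × (Fin n → Bool)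

/-- The value `π(i) ∈ ±[n]` of the signed permutation at position `i ∈ {1,…,n}`,
with the convention `π(0) = 0` (and value `0` outside the range). -/
def bval {n : ℕ} (π : SignedPerm n) (i : ℕ) : ℤ :=
  if h : 1 ≤ i ∧ i ≤ n then
    (if π.2 ⟨i - 1, by omega⟩ then -(((π.1 ⟨i - 1, by omega⟩ : ℕ) : ℤ) + 1)
      else ((π.1 ⟨i - 1, by omega⟩ : ℕ) : ℤ) + 1)
  else 0

/-- The type-A descent number of a signed permutation:
`#{i ∈ [n-1] : π(i) > π(i+1)}`. -/
def desA {n : ℕ} (π : SignedPerm n) : ℕ :=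
  ((Finset.Icc 1 (n - 1)).filter (fun i => bval π (i+1) < bval π i)).card

/-- The type-B descent number of a signed permutation:
`#{i ∈ {0,1,…,n-1} : π(i) > π(i+1)}` with `π(0) = 0`. -/
def desB {n : ℕ} (π : SignedPerm n) : ℕ :=
  ((Finset.range n).filter (fun i => bval π (i+1) < bval π i)).card

/-- The flag descent number: `2·des_A(π)+1` if `π(1) < 0`, and `2·des_A(π)` otherwise. -/
def fdes {n : ℕ} (π : SignedPerm n) : ℕ :=
  if bval π 1 < 0 then 2 * desA π + 1 else 2 * desA π

/-- The word obtained from `f` by inserting two copies of `N` after position `p`. -/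
def insertPair (p N : ℕ) (f : ℕ → ℕ) (i : ℕ) : ℕ :=
  if i ≤ p then f i else if i ≤ p + 2 then N else f (i - 2)

/-- The word obtained from `f` by deleting the letters at positions `p + 1` and `p + 2`. -/
def removePair (p : ℕ) (f : ℕ → ℕ) (i : ℕ) : ℕ :=
  if i ≤ p then f i else f (i + 2)

/-- Stirling permutations of order `n` as words `ℕ → ℕ` supported on `{1, …, 2n}`. -/
structure IsStirlingWord (n : ℕ) (f : ℕ → ℕ) : Prop where
  le : ∀ i, f i ≤ n
  ne_zero : ∀ i, 1 ≤ i → i ≤ 2 * n → f i ≠ 0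
  zero : f 0 = 0
  zero_of_lt : ∀ i, 2 * n < i → f i = 0
  two : ∀ v, 1 ≤ v → v ≤ n → ∃ a b, a < b ∧ f a = v ∧ f b = v ∧ ∀ i, f i = v → i = a ∨ i = b
  lt : ∀ i j k, i < j → j < k → f i ≠ 0 → f i = f k → f i < f j

theorem IsStirlingWord.insert {n p : ℕ} {f : ℕ → ℕ} (hf : IsStirlingWord n f)
    (hp : p ≤ 2 * n) : IsStirlingWord (n + 1) (insertPair p (n + 1) f) := by
  obtain ⟨hle, hne, h0, hgt, htwo, hlt⟩ := hf
  have hval : ∀ i, (i ≤ p → insertPair p (n + 1) f i = f i) ∧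
      (p < i → i ≤ p + 2 → insertPair p (n + 1) f i = n + 1) ∧
      (p + 2 < i → insertPair p (n + 1) f i = f (i - 2)) := by
    intro i
    unfold insertPair
    grind
  refine ⟨?_, ?_, ?_, ?_, ?_, ?_⟩
  · intro i
    grind
  · intro i h1 h2
    grind
  · grind
  · intro i hi
    grind
  · intro v h1 h2
    rcases Nat.lt_or_ge n v with h | h
    · refine ⟨p + 1, p + 2, by omega, ?_, ?_, ?_⟩
      · grind
      · grind
      · intro i hi
        grind
    · obtain ⟨a, b, hab, ha, hb, hu⟩ := htwo v h1 h
      refine ⟨if a ≤ p then a else a + 2, if b ≤ p then b else b + 2, ?_, ?_, ?_, ?_⟩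
      · grind
      · grind
      · grind
      · intro i hi
        have := hu i
        have := hu (i - 2)
        grind
  · intro i j k hij hjk hi hik
    have hi' := hval i
    have hj' := hval j
    have hk' := hval k
    have e1 := hlt i j k
    have e2 := hlt i j (k - 2)
    have e3 := hlt i (j - 2) (k - 2)
    have e4 := hlt (i - 2) (j - 2) (k - 2)
    have l1 := hle i
    have l2 := hle (i - 2)
    have l3 := hle k
    have l4 := hle (k - 2)
    grind

theorem insertPair_injective {n p q : ℕ} {f g : ℕ → ℕ} (hf : IsStirlingWord n f)
    (hg : IsStirlingWord n g) (h : insertPair p (n + 1) f = insertPair q (n + 1) g) :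
    f = g ∧ p = q := by
  have hfl := hf.le
  have hgl := hg.le
  have hpq : p = q := by
    have h1 := congrFun h (p + 1)
    have h2 := congrFun h (q + 1)
    have := hfl (q + 1)
    have := hgl (p + 1)
    have := hfl (q + 1 - 2)
    have := hgl (p + 1 - 2)
    unfold insertPair at h1 h2
    grind
  subst hpq
  refine ⟨funext fun i => ?_, rfl⟩
  have h1 := congrFun h i
  have h2 := congrFun h (i + 2)
  unfold insertPair at h1 h2
  grind

theorem IsStirlingWord.exists_insertPair {n : ℕ} {f : ℕ → ℕ} (hf : IsStirlingWord (n + 1) f) :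
    ∃ g p, IsStirlingWord n g ∧ p ≤ 2 * n ∧ insertPair p (n + 1) g = f := by
  obtain ⟨hle, hne, h0, hgt, htwo, hlt⟩ := hf
  obtain ⟨a, b, hab, ha, hb, hu⟩ := htwo (n + 1) (by omega) le_rfl
  have hadj : b = a + 1 := by
    by_contra hne'
    have := hlt a (a + 1) b (by omega) (by omega) (by omega) (by omega)
    have := hle (a + 1)
    omega
  subst hadj
  have ha1 : 1 ≤ a := by
    by_contra hc
    have : a = 0 := by omega
    subst this
    omega
  have ha2 : a + 1 ≤ 2 * (n + 1) := by
    by_contra hc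
    have := hgt (a + 1) (by omega)
    omega
  obtain ⟨p, rfl⟩ : ∃ p, a = p + 1 := ⟨a - 1, by omega⟩
  replace hb : f (p + 2) = n + 1 := hb
  have hval : ∀ i, (i ≤ p → removePair p f i = f i) ∧ (p < i → removePair p f i = f (i + 2)) := by
    intro i
    unfold removePair
    grind
  refine ⟨removePair p f, p, ⟨?_, ?_, ?_, ?_, ?_, ?_⟩, by omega, ?_⟩
  · intro i
    have := hval i
    have := hle i
    have := hle (i + 2)
    have := hu i
    have := hu (i + 2)
    grind
  · intro i h1 h2
    grind
  · grind
  · intro i hi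
    grind
  · intro v h1 h2
    obtain ⟨c, d, hcd, hc, hd, hv⟩ := htwo v h1 (by omega)
    have key : ∀ c, f c = v → c ≠ p + 1 ∧ c ≠ p + 2 ∧
        removePair p f (if c ≤ p then c else c - 2) = v := by
      intro c hc
      have h3 : c ≠ p + 1 := by rintro rfl; omega
      have h4 : c ≠ p + 2 := by rintro rfl; omega
      refine ⟨h3, h4, ?_⟩
      split_ifs with h
      · rw [(hval c).1 h, hc]
      · rw [(hval (c - 2)).2 (by omega), Nat.sub_add_cancel (by omega), hc]
    have hc' := key c hc
    have hd' := key d hd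
    refine ⟨if c ≤ p then c else c - 2, if d ≤ p then d else d - 2, ?_, hc'.2.2, hd'.2.2, ?_⟩
    · split_ifs <;> omega
    · intro i hi
      rcases Nat.lt_or_ge p i with h | h
      · rw [(hval i).2 h] at hi
        have := hv (i + 2) hi
        split_ifs <;> omega
      · rw [(hval i).1 h] at hi
        have := hv i hi
        split_ifs <;> omega
  · intro i j k hij hjk hi hik
    have hi' := hval i
    have hj' := hval j
    have hk' := hval k
    have e1 := hlt i j k
    have e2 := hlt i j (k + 2)
    have e3 := hlt i (j + 2) (k + 2)
    have e4 := hlt (i + 2) (j + 2) (k + 2)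
    grind
  · funext i
    have h1 := hval i
    have h2 := hval (i - 2)
    unfold insertPair
    have : i ≤ p ∨ i = p + 1 ∨ i = p + 2 ∨ p + 2 < i := by omega
    rcases this with h | h | h | h
    · grind
    · grind
    · grind
    · have : i - 2 + 2 = i := by omega
      grind

theorem sval_eq {n : ℕ} (σ : Fin (2 * n) → Fin (n + 1)) (i : Fin (2 * n)) :
    sval σ (i + 1) = σ i := by
  unfold sval
  rw [dif_pos ⟨by omega, by omega⟩]
  rfl

theorem sval_injective {n : ℕ} :
    Function.Injective (sval : (Fin (2 * n) → Fin (n + 1)) → ℕ → ℕ) := by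
  intro σ τ h
  funext i
  have := congrFun h (i + 1)
  rw [sval_eq, sval_eq] at this
  exact Fin.ext this

theorem ne_zero_of_mem_stirlingSet {n : ℕ} {σ : Fin (2 * n) → Fin (n + 1)}
    (hσ : σ ∈ StirlingSet n) (i : Fin (2 * n)) : σ i ≠ 0 := by
  simp only [StirlingSet, Finset.mem_filter, Finset.mem_univ, true_and] at hσ
  have h := Finset.card_eq_sum_card_fiberwise (s := (Finset.univ : Finset (Fin (2 * n))))
    (t := (Finset.univ : Finset (Fin (n + 1)))) (f := σ) (fun _ _ => Finset.mem_coe.2 (Finset.mem_univ _))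
  rw [Fin.sum_univ_succ, Finset.sum_congr rfl (fun v _ => hσ.1 (Fin.succ v) (by simp))] at h
  simp only [Finset.card_univ, Fintype.card_fin, Finset.sum_const, smul_eq_mul] at h
  have h0 : (Finset.univ.filter (fun i => σ i = 0)).card = 0 := by omega
  rw [Finset.card_eq_zero, Finset.filter_eq_empty_iff] at h0
  exact h0 (Finset.mem_univ i)

theorem isStirlingWord_sval {n : ℕ} {σ : Fin (2 * n) → Fin (n + 1)} (hσ : σ ∈ StirlingSet n) :
    IsStirlingWord n (sval σ) := by
  have hpos := ne_zero_of_mem_stirlingSet hσ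
  simp only [StirlingSet, Finset.mem_filter, Finset.mem_univ, true_and] at hσ
  have hin : ∀ i, 1 ≤ i → i ≤ 2 * n → ∃ j : Fin (2 * n), i = j + 1 := fun i h1 h2 =>
    ⟨⟨i - 1, by omega⟩, by simp; omega⟩
  have hout : ∀ i, ¬(1 ≤ i ∧ i ≤ 2 * n) → sval σ i = 0 := fun i h => dif_neg h
  refine ⟨?_, ?_, ?_, ?_, ?_, ?_⟩
  · intro i
    unfold sval
    split_ifs <;> omega
  · intro i h1 h2
    obtain ⟨j, rfl⟩ := hin i h1 h2
    rw [sval_eq]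
    exact fun h => hpos j (Fin.ext h)
  · exact hout _ (by omega)
  · exact fun i hi => hout _ (by omega)
  · intro v h1 h2
    have h := hσ.1 ⟨v, by omega⟩ (by simp; omega)
    obtain ⟨a, b, hab, h⟩ := Finset.card_eq_two.1 h
    have hu : ∀ i, σ i = ⟨v, by omega⟩ ↔ i = a ∨ i = b := by
      intro i
      have := Finset.ext_iff.1 h i
      simpa using this
    have ha : sval σ (a + 1) = v := by rw [sval_eq, (hu a).2 (Or.inl rfl)]
    have hb : sval σ (b + 1) = v := by rw [sval_eq, (hu b).2 (Or.inr rfl)]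
    have hall : ∀ i, sval σ i = v → i = a + 1 ∨ i = b + 1 := by
      intro i hi
      by_cases hr : 1 ≤ i ∧ i ≤ 2 * n
      · obtain ⟨j, rfl⟩ := hin i hr.1 hr.2
        rw [sval_eq] at hi
        rcases (hu j).1 (Fin.ext hi) with rfl | rfl <;> simp
      · rw [hout i hr] at hi
        omega
    rcases lt_or_gt_of_ne hab with h | h
    · exact ⟨a + 1, b + 1, by simpa using h, ha, hb, hall⟩
    · exact ⟨b + 1, a + 1, by simpa using h, hb, ha, fun i hi => (hall i hi).symm⟩
  · intro i j k hij hjk hi hik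
    have hri : 1 ≤ i ∧ i ≤ 2 * n := by
      by_contra h
      exact hi (hout i h)
    have hrk : 1 ≤ k ∧ k ≤ 2 * n := by
      by_contra h
      exact hi (hik.trans (hout k h))
    obtain ⟨i, rfl⟩ := hin i hri.1 hri.2
    obtain ⟨j, rfl⟩ := hin j (by omega) (by omega)
    obtain ⟨k, rfl⟩ := hin k hrk.1 hrk.2
    simp only [sval_eq] at *
    exact hσ.2 i j k (by simpa using hij) (by simpa using hjk) (Fin.ext hik)

theorem IsStirlingWord.exists_sval {n : ℕ} {f : ℕ → ℕ} (hf : IsStirlingWord n f) :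
    ∃ σ ∈ StirlingSet n, sval σ = f := by
  obtain ⟨hle, hne, h0, hgt, htwo, hlt⟩ := hf
  refine ⟨fun i => ⟨f (i + 1), by have := hle (i + 1); omega⟩, ?_, ?_⟩
  · simp only [StirlingSet, Finset.mem_filter, Finset.mem_univ, true_and, Fin.ext_iff, Fin.lt_def]
    refine ⟨?_, ?_⟩
    · intro v hv
      obtain ⟨a, b, hab, ha, hb, hu⟩ := htwo v (by omega) (by omega)
      have hr : ∀ i, f i = v → 1 ≤ i ∧ i ≤ 2 * n := by
        intro i hi
        by_contra hc
        have : i = 0 ∨ 2 * n < i := by omega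
        rcases this with rfl | h
        · omega
        · have := hgt i h
          omega
      have ha' := hr a ha
      have hb' := hr b hb
      rw [Finset.card_eq_two]
      refine ⟨⟨a - 1, by omega⟩, ⟨b - 1, by omega⟩, by simp; omega, ?_⟩
      ext i
      simp only [Finset.mem_filter, Finset.mem_univ, true_and, Finset.mem_insert,
        Finset.mem_singleton, Fin.ext_iff]
      constructor
      · intro h
        have := hu _ h
        omega
      · rintro (h | h)
        · rw [h, Nat.sub_add_cancel ha'.1, ha]
        · rw [h, Nat.sub_add_cancel hb'.1, hb]
    · intro i j k hij hjk h
      exact hlt _ _ _ (by omega) (by omega) (hne _ (by omega) (by omega)) h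
  · funext i
    unfold sval
    split_ifs with h
    · simp only
      rw [Nat.sub_add_cancel h.1]
    · have : i = 0 ∨ 2 * n < i := by omega
      rcases this with rfl | h
      · exact h0.symm
      · exact (hgt i h).symm

/-- The finite set of Stirling permutations of order `n`, as words `ℕ → ℕ`. -/
noncomputable def stirlingWords (n : ℕ) : Finset (ℕ → ℕ) := by
  classical exact (StirlingSet n).image sval

theorem mem_stirlingWords {n : ℕ} {f : ℕ → ℕ} : f ∈ stirlingWords n ↔ IsStirlingWord n f := by
  classical
  simp only [stirlingWords, Finset.mem_image]
  exact ⟨fun ⟨σ, hσ, h⟩ => h ▸ isStirlingWord_sval hσ, fun h => h.exists_sval⟩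

theorem sum_stirlingWords {M : Type*} [AddCommMonoid M] (n : ℕ) (F : (ℕ → ℕ) → M) :
    ∑ f ∈ stirlingWords n, F f = ∑ σ ∈ StirlingSet n, F (sval σ) := by
  classical
  simp only [stirlingWords]
  exact Finset.sum_image (sval_injective.injOn)

theorem sum_stirlingWords_succ {M : Type*} [AddCommMonoid M] (n : ℕ) (F : (ℕ → ℕ) → M) :
    ∑ f ∈ stirlingWords (n + 1), F f =
      ∑ f ∈ stirlingWords n, ∑ p ∈ Finset.range (2 * n + 1), F (insertPair p (n + 1) f) := by
  rw [← Finset.sum_product']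
  symm
  refine Finset.sum_bij (fun x _ => insertPair x.2 (n + 1) x.1) ?_ ?_ ?_ ?_
  · rintro ⟨f, p⟩ h
    simp only [Finset.mem_product, Finset.mem_range, mem_stirlingWords] at h ⊢
    exact h.1.insert (by omega)
  · rintro ⟨f, p⟩ h ⟨g, q⟩ h' e
    simp only [Finset.mem_product, Finset.mem_range, mem_stirlingWords] at h h'
    obtain ⟨rfl, rfl⟩ := insertPair_injective h.1 h'.1 e
    rfl
  · intro f hf
    obtain ⟨g, p, hg, hp, rfl⟩ := (mem_stirlingWords.1 hf).exists_insertPair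
    refine ⟨(g, p), ?_, rfl⟩
    simp only [Finset.mem_product, Finset.mem_range, mem_stirlingWords]
    exact ⟨hg, by omega⟩
  · intros
    rfl

/-- The indicator of `f i < f (i + 1) = f (i + 2)`. -/
def plateauAt (f : ℕ → ℕ) (i : ℕ) : ℕ :=
  if f i < f (i + 1) ∧ f (i + 1) = f (i + 2) then 1 else 0

/-- The number of left ascent-plateaus of a word supported on `{1, …, 2n}`. -/
def lapWord (n : ℕ) (f : ℕ → ℕ) : ℕ := ∑ i ∈ Finset.range (2 * n + 1), plateauAt f i

/-- The flag ascent-plateau number of a word supported on `{1, …, 2n}`. -/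
def fapWord (n : ℕ) (f : ℕ → ℕ) : ℕ :=
  2 * ∑ i ∈ Finset.range (2 * n), plateauAt f (i + 1) + plateauAt f 0

/-- The number of plateaus of `f` destroyed by an insertion after position `p`. -/
def plateauNear (f : ℕ → ℕ) : ℕ → ℕ
  | 0 => plateauAt f 0
  | p + 1 => plateauAt f p + plateauAt f (p + 1)

theorem plateauAt_eq_zero_or_one (f : ℕ → ℕ) (i : ℕ) : plateauAt f i = 0 ∨ plateauAt f i = 1 := by
  unfold plateauAt
  split_ifs <;> simp

theorem plateauAt_eq_zero {n : ℕ} {f : ℕ → ℕ} (hf : IsStirlingWord n f) {i : ℕ}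
    (hi : 2 * n < i + 2) : plateauAt f i = 0 := by
  have := hf.zero_of_lt (i + 2) hi
  unfold plateauAt
  rw [if_neg]
  omega

theorem plateauNear_eq_zero_or_one (f : ℕ → ℕ) (p : ℕ) :
    plateauNear f p = 0 ∨ plateauNear f p = 1 := by
  cases p with
  | zero => exact plateauAt_eq_zero_or_one f 0
  | succ p =>
    change plateauAt f p + plateauAt f (p + 1) = 0 ∨ plateauAt f p + plateauAt f (p + 1) = 1
    unfold plateauAt
    simp only [Nat.add_assoc, Nat.reduceAdd]
    split_ifs <;> omega

theorem fapWord_add {n : ℕ} (f : ℕ → ℕ) : fapWord n f + plateauAt f 0 = 2 * lapWord n f := by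
  unfold fapWord lapWord
  rw [Finset.sum_range_succ']
  ring

theorem lapQ_eq {n : ℕ} {σ : Fin (2 * n) → Fin (n + 1)} (hσ : σ ∈ StirlingSet n) :
    lapQ σ = lapWord n (sval σ) := by
  have hf := isStirlingWord_sval hσ
  unfold lapQ lapWord
  rw [Finset.card_filter]
  symm
  rw [← Finset.sum_subset (s₁ := Finset.range (2 * n - 1))]
  · refine Finset.sum_bij (fun i _ => i + 1) ?_ ?_ ?_ ?_
    · intro i hi
      simp only [Finset.mem_range, Finset.mem_Icc] at *
      omega
    · intro i _ j _ h
      simpa using h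
    · intro i hi
      rw [Finset.mem_Icc] at hi
      exact ⟨i - 1, Finset.mem_range.2 (by omega), Nat.sub_add_cancel hi.1⟩
    · intro i _
      rfl
  · intro i hi
    simp only [Finset.mem_range] at *
    omega
  · intro i _ hi
    simp only [Finset.mem_range] at *
    exact plateauAt_eq_zero hf (by omega)

theorem apQ_eq {n : ℕ} {σ : Fin (2 * n) → Fin (n + 1)} (hσ : σ ∈ StirlingSet n) :
    apQ σ = ∑ i ∈ Finset.range (2 * n), plateauAt (sval σ) (i + 1) := by
  have hf := isStirlingWord_sval hσ
  unfold apQ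
  rw [Finset.card_filter]
  symm
  rw [← Finset.sum_subset (s₁ := Finset.range (2 * n - 2))]
  · refine Finset.sum_bij (fun i _ => i + 2) ?_ ?_ ?_ ?_
    · intro i hi
      simp only [Finset.mem_range, Finset.mem_Icc] at *
      omega
    · intro i _ j _ h
      simpa using h
    · intro i hi
      rw [Finset.mem_Icc] at hi
      exact ⟨i - 2, Finset.mem_range.2 (by omega), Nat.sub_add_cancel hi.1⟩
    · intro i _
      rfl
  · intro i hi
    simp only [Finset.mem_range] at *
    omega
  · intro i _ hi
    simp only [Finset.mem_range] at *
    exact plateauAt_eq_zero hf (by omega)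

theorem fapQ_eq {n : ℕ} {σ : Fin (2 * n) → Fin (n + 1)} (hσ : σ ∈ StirlingSet n) :
    fapQ σ = fapWord n (sval σ) := by
  have hf := isStirlingWord_sval hσ
  unfold fapQ fapWord
  rw [apQ_eq hσ]
  have h0 := hf.zero
  have h1 := hf.ne_zero 1 le_rfl
  have h2 := hf.zero_of_lt 1
  have : plateauAt (sval σ) 0 = if 1 ≤ n ∧ sval σ 1 = sval σ 2 then 1 else 0 := by
    unfold plateauAt
    congr 1
    simp only [zero_add, h0, eq_iff_iff]
    constructor <;> rintro ⟨_, _⟩ <;> constructor <;> omega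
  rw [this]
  split_ifs <;> ring

theorem plateauAt_insertPair_of_lt {n : ℕ} {f : ℕ → ℕ} {p i : ℕ} (hi : i + 2 ≤ p) :
    plateauAt (insertPair p (n + 1) f) i = plateauAt f i := by
  unfold plateauAt insertPair
  simp only [show i ≤ p by omega, show i + 1 ≤ p by omega, hi, if_true]

theorem plateauAt_insertPair_pred {n : ℕ} {f : ℕ → ℕ} (hf : IsStirlingWord n f) (p : ℕ) :
    plateauAt (insertPair (p + 1) (n + 1) f) p = 0 := by
  have := hf.le (p + 1)
  unfold plateauAt insertPair
  grind

theorem plateauAt_insertPair_self {n : ℕ} {f : ℕ → ℕ} (hf : IsStirlingWord n f) (p : ℕ) :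
    plateauAt (insertPair p (n + 1) f) p = 1 := by
  have := hf.le p
  unfold plateauAt insertPair
  grind

theorem plateauAt_insertPair_add_one {n : ℕ} {f : ℕ → ℕ} (p : ℕ) :
    plateauAt (insertPair p (n + 1) f) (p + 1) = 0 := by
  unfold plateauAt insertPair
  grind

theorem plateauAt_insertPair_add_two {n : ℕ} {f : ℕ → ℕ} (hf : IsStirlingWord n f) (p : ℕ) :
    plateauAt (insertPair p (n + 1) f) (p + 2) = 0 := by
  have := hf.le (p + 1)
  unfold plateauAt insertPair
  grind

theorem plateauAt_insertPair_add_three {n : ℕ} {f : ℕ → ℕ} (p i : ℕ) :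
    plateauAt (insertPair p (n + 1) f) (p + i + 3) = plateauAt f (p + i + 1) := by
  have h : ∀ j, p + 2 < j → insertPair p (n + 1) f j = f (j - 2) := by
    intro j hj
    unfold insertPair
    grind
  unfold plateauAt
  rw [h _ (by omega), h _ (by omega), h _ (by omega)]
  rfl

theorem lapWord_insertPair {n p : ℕ} {f : ℕ → ℕ} (hf : IsStirlingWord n f) (hp : p ≤ 2 * n) :
    lapWord (n + 1) (insertPair p (n + 1) f) + plateauNear f p = lapWord n f + 1 := by
  unfold lapWord
  obtain ⟨m, hm⟩ : ∃ m, 2 * n = p + m := ⟨2 * n - p, by omega⟩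
  rw [show 2 * (n + 1) + 1 = p + (m + 3) by omega, show 2 * n + 1 = p + (m + 1) by omega,
    Finset.sum_range_add _ p (m + 3), Finset.sum_range_add _ p (m + 1)]
  have htail : ∑ i ∈ Finset.range (m + 3), plateauAt (insertPair p (n + 1) f) (p + i) =
      1 + ∑ i ∈ Finset.range m, plateauAt f (p + i + 1) := by
    rw [Finset.sum_range_succ', Finset.sum_range_succ', Finset.sum_range_succ']
    have h1 := plateauAt_insertPair_self hf p
    have h2 := plateauAt_insertPair_add_one (n := n) (f := f) p
    have h3 := plateauAt_insertPair_add_two hf p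
    have h4 : ∀ i, plateauAt (insertPair p (n + 1) f) (p + (i + 1 + 1 + 1)) =
      plateauAt f (p + i + 1) := fun i => plateauAt_insertPair_add_three p i
    simp only [h4, zero_add, add_zero, Nat.reduceAdd, h1, h2, h3]
    ring
  rw [htail, Finset.sum_range_succ' _ m]
  cases p with
  | zero =>
    simp only [plateauNear, Finset.range_zero, Finset.sum_empty, zero_add, add_zero]
    ring
  | succ q =>
    rw [Finset.sum_range_succ, Finset.sum_range_succ _ q, plateauAt_insertPair_pred hf,
      Finset.sum_congr rfl (fun i hi => plateauAt_insertPair_of_lt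
        (by have := Finset.mem_range.1 hi; omega))]
    simp only [plateauNear, ← add_assoc, add_zero]
    ring

theorem sum_plateauNear {n : ℕ} {f : ℕ → ℕ} (hf : IsStirlingWord n f) :
    ∑ p ∈ Finset.range (2 * n + 1), plateauNear f p = 2 * lapWord n f := by
  unfold lapWord
  rw [Finset.sum_range_succ']
  simp only [plateauNear]
  rw [Finset.sum_add_distrib, add_assoc, ← Finset.sum_range_succ' (plateauAt f),
    Finset.sum_range_succ (plateauAt f), plateauAt_eq_zero hf (by omega)]
  ring

local notation "𝕏" => (Polynomial.X : Polynomial ℤ)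

/-- The derivation `X (1 - X ^ 2) d/dX`. -/
noncomputable def flagDeriv (P : Polynomial ℤ) : Polynomial ℤ :=
  𝕏 * (1 - 𝕏 ^ 2) * Polynomial.derivative P

theorem flagDeriv_X_pow (m : ℕ) :
    flagDeriv (𝕏 ^ m) = (m : Polynomial ℤ) * (1 - 𝕏 ^ 2) * 𝕏 ^ m := by
  unfold flagDeriv
  cases m with
  | zero => simp
  | succ m =>
    rw [Polynomial.derivative_X_pow]
    simp only [Nat.add_sub_cancel, map_natCast]
    ring

theorem flagDeriv_sum {ι : Type*} (s : Finset ι) (P : ι → Polynomial ℤ) :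
    flagDeriv (∑ i ∈ s, P i) = ∑ i ∈ s, flagDeriv (P i) := by
  simp only [flagDeriv, Polynomial.derivative_sum, Finset.mul_sum]

theorem flagDeriv_mul (P Q : Polynomial ℤ) :
    flagDeriv (P * Q) = flagDeriv P * Q + P * flagDeriv Q := by
  simp only [flagDeriv, Polynomial.derivative_mul]
  ring

theorem flagDeriv_natCast_mul (m : ℕ) (P : Polynomial ℤ) :
    flagDeriv ((m : Polynomial ℤ) * P) = m * flagDeriv P := by
  simp only [flagDeriv, Polynomial.derivative_natCast_mul]
  ring

/-- The generating polynomial of `2 lap` over Stirling permutations of order `n`. -/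
noncomputable def lapPoly (n : ℕ) : Polynomial ℤ :=
  ∑ f ∈ stirlingWords n, 𝕏 ^ (2 * lapWord n f)

/-- The generating polynomial of `fap` over Stirling permutations of order `n`. -/
noncomputable def fapPoly (n : ℕ) : Polynomial ℤ :=
  ∑ f ∈ stirlingWords n, 𝕏 ^ fapWord n f

theorem X_pow_of_add_eq {a b c : ℕ} (hc : c = 0 ∨ c = 1) (h : a + 2 * c = b + 2) :
    𝕏 ^ a =
      𝕏 ^ b * (𝕏 ^ 2 + c * (1 - 𝕏 ^ 2)) := by
  rcases hc with rfl | rfl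
  · obtain rfl : a = b + 2 := by omega
    simp [pow_add]
  · obtain rfl : a = b := by omega
    simp

theorem lapPoly_succ (n : ℕ) :
    lapPoly (n + 1) = flagDeriv (lapPoly n) +
      (2 * n + 1 : Polynomial ℤ) * 𝕏 ^ 2 * lapPoly n := by
  unfold lapPoly
  rw [sum_stirlingWords_succ, flagDeriv_sum, Finset.mul_sum, ← Finset.sum_add_distrib]
  refine Finset.sum_congr rfl fun f hf => ?_
  rw [mem_stirlingWords] at hf
  have h : ∀ p ∈ Finset.range (2 * n + 1),
      𝕏 ^ (2 * lapWord (n + 1) (insertPair p (n + 1) f)) =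
        𝕏 ^ (2 * lapWord n f) *
          (𝕏 ^ 2 + plateauNear f p * (1 - 𝕏 ^ 2)) := by
    intro p hp
    have := lapWord_insertPair hf (Nat.lt_succ_iff.1 (Finset.mem_range.1 hp))
    exact X_pow_of_add_eq (plateauNear_eq_zero_or_one f p) (by omega)
  rw [Finset.sum_congr rfl h, ← Finset.mul_sum, Finset.sum_add_distrib, ← Finset.sum_mul,
    ← Nat.cast_sum, sum_plateauNear hf, flagDeriv_X_pow]
  simp only [Finset.sum_const, Finset.card_range, nsmul_eq_mul]
  push_cast
  ring

theorem fapPoly_succ (n : ℕ) :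
    fapPoly (n + 1) = flagDeriv (fapPoly n) +
      (𝕏 + 2 * n * 𝕏 ^ 2 : Polynomial ℤ) * fapPoly n := by
  unfold fapPoly
  rw [sum_stirlingWords_succ, flagDeriv_sum, Finset.mul_sum, ← Finset.sum_add_distrib]
  refine Finset.sum_congr rfl fun f hf => ?_
  rw [mem_stirlingWords] at hf
  have hfap := fapWord_add (n := n) f
  have hfap' : ∀ p, p ≤ 2 * n →
      fapWord (n + 1) (insertPair p (n + 1) f) + plateauAt (insertPair p (n + 1) f) 0 +
        2 * plateauNear f p = fapWord n f + plateauAt f 0 + 2 := by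
    intro p hp
    have h1 := fapWord_add (n := n + 1) (insertPair p (n + 1) f)
    have h2 := lapWord_insertPair hf hp
    omega
  have hfront := hfap' 0 (by omega)
  rw [plateauAt_insertPair_self hf] at hfront
  simp only [plateauNear] at hfront
  rw [Finset.sum_range_succ']
  rcases Nat.eq_zero_or_pos n with rfl | hn
  · have h0 : plateauAt f 0 = 0 := plateauAt_eq_zero hf (by omega)
    have h1 : fapWord 0 f = 0 := by simp [fapWord, h0]
    rw [h1, h0] at hfront
    rw [h1, flagDeriv_X_pow, show fapWord (0 + 1) (insertPair 0 (0 + 1) f) = 1 by omega]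
    simp
  obtain ⟨m, hm⟩ : ∃ m, 2 * n = m + 1 := ⟨2 * n - 1, by omega⟩
  rw [hm, Finset.sum_range_succ']
  have hsecond := hfap' 1 (by omega)
  rw [plateauAt_insertPair_pred hf 0] at hsecond
  simp only [plateauNear, zero_add] at hsecond
  have h : ∀ p ∈ Finset.range m,
      𝕏 ^ fapWord (n + 1) (insertPair (p + 1 + 1) (n + 1) f) =
        𝕏 ^ fapWord n f *
          (𝕏 ^ 2 + plateauNear f (p + 1 + 1) * (1 - 𝕏 ^ 2)) := by
    intro p hp
    have h1 := hfap' (p + 1 + 1) (by have := Finset.mem_range.1 hp; omega)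
    rw [plateauAt_insertPair_of_lt (by omega)] at h1
    exact X_pow_of_add_eq (plateauNear_eq_zero_or_one f _) (by omega)
  have hsum := sum_plateauNear hf
  rw [hm, Finset.sum_range_succ', Finset.sum_range_succ', ← hfap] at hsum
  simp only [plateauNear, zero_add] at hsum
  rw [Finset.sum_congr rfl h, ← Finset.mul_sum, Finset.sum_add_distrib, ← Finset.sum_mul,
    ← Nat.cast_sum, flagDeriv_X_pow]
  simp only [plateauNear, zero_add, Finset.sum_const, Finset.card_range, nsmul_eq_mul]
  set S := ∑ p ∈ Finset.range m, (plateauAt f (p + 1) + plateauAt f (p + 1 + 1))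
  have hS : S + plateauAt f 0 + plateauAt f 1 = fapWord n f := by omega
  have hm' : (2 * n : Polynomial ℤ) = m + 1 := by exact_mod_cast hm
  have hone := plateauNear_eq_zero_or_one f 1
  simp only [plateauNear, zero_add] at hone
  rw [hm', ← hS]
  rw [← hS] at hfront hsecond
  generalize plateauAt f 0 = d₀ at *
  generalize plateauAt f 1 = d₁ at *
  have : (d₀ = 0 ∧ d₁ = 0) ∨ (d₀ = 1 ∧ d₁ = 0) ∨ (d₀ = 0 ∧ d₁ = 1) := by omega
  rcases this with ⟨rfl, rfl⟩ | ⟨rfl, rfl⟩ | ⟨rfl, rfl⟩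
  · rw [show fapWord (n + 1) (insertPair 0 (n + 1) f) = S + 1 by omega,
      show fapWord (n + 1) (insertPair 1 (n + 1) f) = S + 2 by omega]
    push_cast
    ring
  · rw [show fapWord (n + 1) (insertPair 0 (n + 1) f) = S + 1 by omega,
      show fapWord (n + 1) (insertPair 1 (n + 1) f) = S + 2 by omega]
    push_cast
    ring
  · rw [show fapWord (n + 1) (insertPair 0 (n + 1) f) = S + 2 by omega,
      show fapWord (n + 1) (insertPair 1 (n + 1) f) = S + 1 by omega]
    push_cast
    ring

theorem stirlingWords_zero : stirlingWords 0 = {fun _ => 0} := by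
  ext f
  rw [mem_stirlingWords, Finset.mem_singleton]
  constructor
  · intro h
    funext i
    exact Nat.le_zero.1 (h.le i)
  · rintro rfl
    exact ⟨by simp, by omega, rfl, by simp, by omega, by simp⟩

theorem lapPoly_zero : lapPoly 0 = 1 := by
  simp [lapPoly, stirlingWords_zero, lapWord, plateauAt]

theorem fapPoly_zero : fapPoly 0 = 1 := by
  simp [fapPoly, stirlingWords_zero, fapWord, plateauAt]

/-- The binomial convolution of two sequences satisfying first-order recurrences for `flagDeriv`
again satisfies such a recurrence. -/
theorem binomial_convolution_succ {F L : ℕ → Polynomial ℤ}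
    (hF : ∀ n : ℕ, F (n + 1) = flagDeriv (F n) + (𝕏 + 2 * n * 𝕏 ^ 2 : Polynomial ℤ) * F n)
    (hL : ∀ n : ℕ, L (n + 1) = flagDeriv (L n) + (2 * n + 1 : Polynomial ℤ) * 𝕏 ^ 2 * L n)
    (n : ℕ) :
    ∑ k ∈ Finset.range (n + 1 + 1), ((n + 1).choose k : Polynomial ℤ) * F k * L (n + 1 - k) =
      flagDeriv (∑ k ∈ Finset.range (n + 1), (n.choose k : Polynomial ℤ) * F k * L (n - k)) +
        (𝕏 + (2 * n + 1) * 𝕏 ^ 2 : Polynomial ℤ) *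
          ∑ k ∈ Finset.range (n + 1), (n.choose k : Polynomial ℤ) * F k * L (n - k) := by
  have hstep : ∀ k ∈ Finset.range (n + 1),
      flagDeriv ((n.choose k : Polynomial ℤ) * F k * L (n - k)) +
        (𝕏 + (2 * n + 1) * 𝕏 ^ 2 : Polynomial ℤ) *
          ((n.choose k : Polynomial ℤ) * F k * L (n - k)) =
      (n.choose k : Polynomial ℤ) * F (k + 1) * L (n - k) +
        (n.choose k : Polynomial ℤ) * F k * L (n + 1 - k) := by
    intro k hk
    obtain ⟨m, rfl⟩ : ∃ m, n = k + m := ⟨n - k, by have := Finset.mem_range.1 hk; omega⟩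
    rw [show k + m + 1 - k = m + 1 by omega, Nat.add_sub_cancel_left, mul_assoc,
      flagDeriv_natCast_mul, flagDeriv_mul, hL, hF]
    push_cast
    ring
  rw [flagDeriv_sum, Finset.mul_sum, ← Finset.sum_add_distrib, Finset.sum_congr rfl hstep,
    Finset.sum_add_distrib, Finset.sum_range_succ' _ (n + 1)]
  have hlast : ∑ k ∈ Finset.range (n + 1),
      (n.choose k : Polynomial ℤ) * F k * L (n + 1 - k) =
      ∑ k ∈ Finset.range (n + 1),
        (n.choose (k + 1) : Polynomial ℤ) * F (k + 1) * L (n - k) +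
      F 0 * L (n + 1) := by
    have := Finset.sum_range_succ
      (fun k => (n.choose k : Polynomial ℤ) * F k * L (n + 1 - k)) (n + 1)
    rw [Nat.choose_succ_self, Nat.cast_zero, zero_mul, zero_mul, add_zero] at this
    rw [← this, Finset.sum_range_succ']
    simp
  rw [hlast, ← add_assoc, ← Finset.sum_add_distrib]
  congr 1
  · refine Finset.sum_congr rfl fun k _ => ?_
    rw [Nat.choose_succ_succ, Nat.add_sub_add_right]
    push_cast
    ring
  · simp

/-- The binomial convolution of `fapPoly` and `lapPoly`. -/
noncomputable def stirlingConvolution (n : ℕ) : Polynomial ℤ :=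
  ∑ k ∈ Finset.range (n + 1), (n.choose k : Polynomial ℤ) * fapPoly k * lapPoly (n - k)

theorem stirlingConvolution_succ (n : ℕ) :
    stirlingConvolution (n + 1) = flagDeriv (stirlingConvolution n) +
      (𝕏 + (2 * n + 1) * 𝕏 ^ 2 : Polynomial ℤ) * stirlingConvolution n :=
  binomial_convolution_succ fapPoly_succ lapPoly_succ n

theorem stirlingConvolution_zero : stirlingConvolution 0 = 1 := by
  simp only [stirlingConvolution, zero_add, Finset.sum_range_one, Nat.choose_self, Nat.cast_one,
    one_mul, fapPoly_zero, Nat.sub_self, lapPoly_zero]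

/-- The signed permutation obtained by inserting the letter `n + 1`, negated if `b` holds, at
position `p`. -/
def insertLetter {n : ℕ} (π : SignedPerm n) (p : Fin (n + 1)) (b : Bool) : SignedPerm (n + 1) :=
  (((finSuccEquiv' p).trans (Equiv.optionCongr π.1)).trans (finSuccEquiv' (Fin.last n)).symm,
    Fin.insertNth (α := fun _ => Bool) p b π.2)

theorem insertLetter_fst_self {n : ℕ} (π : SignedPerm n) (p : Fin (n + 1)) (b : Bool) :
    (insertLetter π p b).1 p = Fin.last n := by
  simp [insertLetter]

theorem insertLetter_fst_succAbove {n : ℕ} (π : SignedPerm n) (p : Fin (n + 1)) (b : Bool)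
    (j : Fin n) : (insertLetter π p b).1 (p.succAbove j) = (π.1 j).castSucc := by
  simp [insertLetter]

theorem insertLetter_snd_self {n : ℕ} (π : SignedPerm n) (p : Fin (n + 1)) (b : Bool) :
    (insertLetter π p b).2 p = b := by
  simp [insertLetter]

theorem insertLetter_snd_succAbove {n : ℕ} (π : SignedPerm n) (p : Fin (n + 1)) (b : Bool)
    (j : Fin n) : (insertLetter π p b).2 (p.succAbove j) = π.2 j := by
  simp [insertLetter]

theorem insertLetter_bijective (n : ℕ) : Function.Bijective
    (fun x : SignedPerm n × Fin (n + 1) × Bool => insertLetter x.1 x.2.1 x.2.2) := by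
  rw [Fintype.bijective_iff_injective_and_card]
  constructor
  · rintro ⟨π, p, b⟩ ⟨τ, q, c⟩ h
    simp only at h
    have hpq : p = q := by
      apply (insertLetter τ q c).1.injective
      rw [insertLetter_fst_self, ← h, insertLetter_fst_self]
    subst hpq
    have hb : b = c := by
      rw [← insertLetter_snd_self π p b, h, insertLetter_snd_self]
    have h1 : π.1 = τ.1 := by
      ext j
      have := insertLetter_fst_succAbove π p b j
      rw [h, insertLetter_fst_succAbove] at this
      exact congrArg Fin.val (Fin.castSucc_injective _ this).symm
    have h2 : π.2 = τ.2 := by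
      funext j
      rw [← insertLetter_snd_succAbove π p b j, h, insertLetter_snd_succAbove]
    rw [hb, Prod.ext h1 h2]
  · simp only [Fintype.card_prod, Fintype.card_perm, Fintype.card_fin, Fintype.card_bool,
      Fintype.card_pi, Finset.prod_const, Finset.card_univ, Nat.factorial_succ, pow_succ]
    ring

theorem sum_signedPerm_succ {M : Type*} [AddCommMonoid M] (n : ℕ) (F : SignedPerm (n + 1) → M) :
    ∑ π, F π = ∑ π : SignedPerm n, ∑ p : Fin (n + 1),
      (F (insertLetter π p false) + F (insertLetter π p true)) := by
  rw [← (insertLetter_bijective n).sum_comp F, Fintype.sum_prod_type]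
  refine Finset.sum_congr rfl fun π _ => ?_
  rw [Fintype.sum_prod_type]
  refine Finset.sum_congr rfl fun p _ => ?_
  rw [Fintype.sum_bool, add_comm]

/-- The word obtained from `w` by inserting `s` after position `p`. -/
def insertAfter (p : ℕ) (s : ℤ) (w : ℕ → ℤ) (i : ℕ) : ℤ :=
  if i ≤ p then w i else if i = p + 1 then s else w (i - 1)

theorem bval_add_one {n : ℕ} (π : SignedPerm n) (j : Fin n) :
    bval π (j + 1) = if π.2 j then -((π.1 j : ℕ) + 1 : ℤ) else (π.1 j : ℕ) + 1 := by
  unfold bval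
  rw [dif_pos ⟨by omega, by omega⟩]
  rfl

theorem bval_insertLetter {n : ℕ} (π : SignedPerm n) (p : Fin (n + 1)) (b : Bool) :
    bval (insertLetter π p b) =
      insertAfter p (if b then -(n + 1 : ℤ) else n + 1) (bval π) := by
  have hout : ∀ {m : ℕ} (τ : SignedPerm m) (i : ℕ), ¬(1 ≤ i ∧ i ≤ m) → bval τ i = 0 :=
    fun τ i h => dif_neg h
  funext i
  by_cases hi : 1 ≤ i ∧ i ≤ n + 1
  · obtain ⟨j, rfl⟩ : ∃ j : Fin (n + 1), i = j + 1 := ⟨⟨i - 1, by omega⟩, by simp; omega⟩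
    rw [bval_add_one]
    rcases Fin.eq_self_or_eq_succAbove p j with rfl | ⟨k, rfl⟩
    · rw [insertLetter_fst_self, insertLetter_snd_self]
      simp [insertAfter]
    · rw [insertLetter_fst_succAbove, insertLetter_snd_succAbove, Fin.val_castSucc,
        ← bval_add_one]
      unfold insertAfter
      rcases Nat.lt_or_ge k p with h | h
      · rw [Fin.succAbove_of_castSucc_lt _ _ h, if_pos (by simp; omega)]
        rfl
      · rw [Fin.succAbove_of_le_castSucc _ _ h, if_neg (by simp; omega), if_neg (by simp; omega)]
        rfl
  · rw [hout _ _ hi]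
    unfold insertAfter
    have := p.2
    rw [if_neg (by omega : ¬i = p + 1)]
    split_ifs
    · rw [hout _ _ (by omega)]
    · rw [hout _ _ (by omega)]

theorem bval_bounds {n : ℕ} (π : SignedPerm n) (i : ℕ) :
    -(n + 1 : ℤ) < bval π i ∧ bval π i < n + 1 := by
  unfold bval
  split_ifs <;> omega

/-- The indicator of `w (i + 1) < w i`. -/
def descentAt (w : ℕ → ℤ) (i : ℕ) : ℕ := if w (i + 1) < w i then 1 else 0

theorem descentAt_eq_zero_or_one (w : ℕ → ℤ) (i : ℕ) : descentAt w i = 0 ∨ descentAt w i = 1 := by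
  unfold descentAt
  split_ifs <;> simp

/-- The number of descents of `w` at the positions `1, …, m`. -/
def descents (m : ℕ) (w : ℕ → ℤ) : ℕ := ∑ i ∈ Finset.range m, descentAt w (i + 1)

theorem fdes_eq {m : ℕ} (π : SignedPerm (m + 1)) :
    fdes π = 2 * descents m (bval π) + descentAt (bval π) 0 := by
  have h : desA π = descents m (bval π) := by
    unfold desA descents
    rw [Finset.card_filter]
    symm
    refine Finset.sum_bij (fun i _ => i + 1) ?_ ?_ ?_ ?_
    · intro i hi
      rw [Finset.mem_range] at hi
      rw [Finset.mem_Icc]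
      omega
    · intro i _ j _ h
      simpa using h
    · intro i hi
      rw [Finset.mem_Icc] at hi
      exact ⟨i - 1, Finset.mem_range.2 (by omega), Nat.sub_add_cancel hi.1⟩
    · intro i _
      rfl
  have h0 : bval π 0 = 0 := dif_neg (by omega)
  unfold fdes descentAt
  rw [h, h0, zero_add]
  split_ifs <;> rfl

theorem descentAt_insertAfter_of_lt {p i : ℕ} (s : ℤ) (w : ℕ → ℤ) (h : i < p) :
    descentAt (insertAfter p s w) i = descentAt w i := by
  unfold descentAt insertAfter
  rw [if_pos (Nat.succ_le_of_lt h), if_pos h.le]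

theorem descentAt_insertAfter_self (p : ℕ) (s : ℤ) (w : ℕ → ℤ) :
    descentAt (insertAfter p s w) p = if s < w p then 1 else 0 := by
  simp [descentAt, insertAfter]

theorem descentAt_insertAfter_add_one (p : ℕ) (s : ℤ) (w : ℕ → ℤ) :
    descentAt (insertAfter p s w) (p + 1) = if w (p + 1) < s then 1 else 0 := by
  simp [descentAt, insertAfter]

theorem descentAt_insertAfter_add_two (p i : ℕ) (s : ℤ) (w : ℕ → ℤ) :
    descentAt (insertAfter p s w) (p + i + 2) = descentAt w (p + i + 1) := by
  unfold descentAt insertAfter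
  simp only [show ¬p + i + 2 ≤ p by omega, show ¬p + i + 2 = p + 1 by omega,
    show ¬p + i + 2 + 1 ≤ p by omega, show ¬p + i + 2 + 1 = p + 1 by omega, if_false]
  rfl

theorem descents_insertAfter_zero (m : ℕ) (s : ℤ) (w : ℕ → ℤ) :
    descents (m + 1) (insertAfter 0 s w) = descents m w + if w 1 < s then 1 else 0 := by
  unfold descents
  rw [Finset.sum_range_succ', descentAt_insertAfter_add_one]
  congr 1

theorem descents_insertAfter_last (m : ℕ) (s : ℤ) (w : ℕ → ℤ) :
    descents (m + 1) (insertAfter (m + 1) s w) =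
      descents m w + if s < w (m + 1) then 1 else 0 := by
  unfold descents
  rw [Finset.sum_range_succ, descentAt_insertAfter_self]
  congr 1
  refine Finset.sum_congr rfl fun i hi => ?_
  exact descentAt_insertAfter_of_lt _ _ (by have := Finset.mem_range.1 hi; omega)

theorem descents_insertAfter_succ {m q : ℕ} (hq : q < m) {s : ℤ} {w : ℕ → ℤ}
    (hs : (∀ i, w i < s) ∨ ∀ i, s < w i) :
    descents (m + 1) (insertAfter (q + 1) s w) + descentAt w (q + 1) = descents m w + 1 := by
  obtain ⟨r, rfl⟩ : ∃ r, m = q + (r + 1) := ⟨m - q - 1, by omega⟩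
  unfold descents
  rw [add_assoc q, Finset.sum_range_add _ q (r + 1 + 1), Finset.sum_range_add _ q (r + 1),
    Finset.sum_range_succ' _ (r + 1), Finset.sum_range_succ' _ r, Finset.sum_range_succ' _ r,
    Finset.sum_congr rfl (fun i hi => descentAt_insertAfter_of_lt (p := q + 1) s w
      (by have := Finset.mem_range.1 hi; omega))]
  have h1 : descentAt (insertAfter (q + 1) s w) (q + 0 + 1) +
      descentAt (insertAfter (q + 1) s w) (q + (0 + 1) + 1) = 1 := by
    have := descentAt_insertAfter_self (q + 1) s w
    have := descentAt_insertAfter_add_one (q + 1) s w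
    simp only [add_zero, zero_add]
    rcases hs with hs | hs
    · have := hs (q + 1)
      have := hs (q + 1 + 1)
      grind
    · have := hs (q + 1)
      have := hs (q + 1 + 1)
      grind
  have h2 : ∀ i, descentAt (insertAfter (q + 1) s w) (q + (i + 1 + 1) + 1) =
      descentAt w (q + (i + 1) + 1) := by
    intro i
    have := descentAt_insertAfter_add_two (q + 1) i s w
    rw [show q + (i + 1 + 1) + 1 = q + 1 + i + 2 by omega, this]
    congr 1
    omega
  simp only [h2, add_zero] at h1 ⊢
  omega

/-- The generating polynomial of `fdes + 1` over signed permutations of order `n`. -/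
noncomputable def fdesPoly (n : ℕ) : Polynomial ℤ := ∑ π : SignedPerm n, 𝕏 ^ (fdes π + 1)

theorem sum_descents_insertAfter {m : ℕ} {N : ℤ} {w : ℕ → ℤ} (h0 : w 0 = 0) (hN : 0 < N)
    (hb : ∀ i, -N < w i ∧ w i < N) (e : (ℕ → ℤ) → ℕ)
    (he : ∀ v, e v = 2 * descents (m + 1) v + descentAt v 0 + 1) :
    ∑ p ∈ Finset.range (m + 1 + 1), (𝕏 ^ e (insertAfter p N w) + 𝕏 ^ e (insertAfter p (-N) w)) =
      flagDeriv (𝕏 ^ (2 * descents m w + descentAt w 0 + 1)) +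
        (𝕏 + (2 * (m + 1 : ℕ) + 1) * 𝕏 ^ 2 : Polynomial ℤ) *
          𝕏 ^ (2 * descents m w + descentAt w 0 + 1) := by
  have hinner : ∀ q ∈ Finset.range m,
      𝕏 ^ e (insertAfter (q + 1) N w) + 𝕏 ^ e (insertAfter (q + 1) (-N) w) =
        2 * 𝕏 ^ (2 * descents m w + descentAt w 0 + 1) *
          (𝕏 ^ 2 + descentAt w (q + 1) * (1 - 𝕏 ^ 2)) := by
    intro q hq
    have h1 := descents_insertAfter_succ (Finset.mem_range.1 hq) (.inl fun i => (hb i).2)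
    have h2 := descents_insertAfter_succ (Finset.mem_range.1 hq) (.inr fun i => (hb i).1)
    have hpow : ∀ d, d + descentAt w (q + 1) = descents m w + 1 →
        𝕏 ^ (2 * d + descentAt w 0 + 1) = 𝕏 ^ (2 * descents m w + descentAt w 0 + 1) *
          (𝕏 ^ 2 + descentAt w (q + 1) * (1 - 𝕏 ^ 2)) := fun d hd =>
      X_pow_of_add_eq (descentAt_eq_zero_or_one w (q + 1)) (by omega)
    rw [he, he, descentAt_insertAfter_of_lt _ _ (Nat.succ_pos q),
      descentAt_insertAfter_of_lt _ _ (Nat.succ_pos q),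
      hpow _ h1, hpow _ h2]
    ring
  rw [Finset.sum_range_succ, Finset.sum_range_succ', Finset.sum_congr rfl hinner,
    ← Finset.mul_sum, Finset.sum_add_distrib, ← Finset.sum_mul, ← Nat.cast_sum,
    flagDeriv_X_pow, he, he, he, he, descentAt_insertAfter_self, descentAt_insertAfter_self,
    descentAt_insertAfter_of_lt _ _ (Nat.succ_pos m),
    descentAt_insertAfter_of_lt _ _ (Nat.succ_pos m), descents_insertAfter_zero,
    descents_insertAfter_zero, descents_insertAfter_last, descents_insertAfter_last,
    if_pos (hb 1).2, if_neg (hb 1).1.le.not_gt, if_neg (hb (m + 1)).2.le.not_gt,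
    if_pos (hb (m + 1)).1, h0, if_neg hN.le.not_gt, if_pos (neg_lt_zero.2 hN)]
  change 2 * 𝕏 ^ (2 * descents m w + descentAt w 0 + 1) *
    (_ + (descents m w : Polynomial ℤ) * (1 - 𝕏 ^ 2)) + _ + _ = _
  simp only [Finset.sum_const, Finset.card_range, nsmul_eq_mul]
  rcases descentAt_eq_zero_or_one w 0 with h | h <;> rw [h] <;> push_cast <;> ring

theorem fdesPoly_succ (m : ℕ) :
    fdesPoly (m + 1 + 1) = flagDeriv (fdesPoly (m + 1)) +
      (𝕏 + (2 * (m + 1 : ℕ) + 1) * 𝕏 ^ 2 : Polynomial ℤ) * fdesPoly (m + 1) := by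
  unfold fdesPoly
  rw [sum_signedPerm_succ, flagDeriv_sum, Finset.mul_sum, ← Finset.sum_add_distrib]
  refine Finset.sum_congr rfl fun π _ => ?_
  have h0 : bval π 0 = 0 := dif_neg (by omega)
  simp only [fdes_eq, bval_insertLetter, Bool.false_eq_true, if_false, if_true]
  rw [← sum_descents_insertAfter h0 (by positivity) (bval_bounds π) _ fun _ => rfl,
    ← Fin.sum_univ_eq_sum_range]

theorem fdesPoly_one : fdesPoly 1 = 𝕏 + 𝕏 ^ 2 := by
  have h : fdesPoly 1 = ∑ π : SignedPerm 0, ∑ p : Fin 1,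
      (𝕏 ^ (fdes (insertLetter π p false) + 1) + 𝕏 ^ (fdes (insertLetter π p true) + 1)) :=
    sum_signedPerm_succ 0 _
  rw [h]
  simp [fdes_eq, descents, descentAt, bval, insertLetter_snd_self, add_comm]

theorem fdesPoly_eq_stirlingConvolution (m : ℕ) :
    fdesPoly (m + 1) = stirlingConvolution (m + 1) := by
  induction m with
  | zero =>
    rw [fdesPoly_one, stirlingConvolution_succ, stirlingConvolution_zero]
    simp [flagDeriv]
  | succ m ih => rw [fdesPoly_succ, ih, stirlingConvolution_succ (m + 1)]

theorem statement_8 (n : ℕ) (hn : 1 ≤ n) :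
    (∑ π : SignedPerm n, (Polynomial.X : Polynomial ℤ) ^ (fdes π + 1)) =
      ∑ k ∈ Finset.range (n + 1), (n.choose k : Polynomial ℤ) *
        (∑ σ ∈ StirlingSet k, (Polynomial.X : Polynomial ℤ) ^ fapQ σ) *
        (∑ σ ∈ StirlingSet (n - k), (Polynomial.X : Polynomial ℤ) ^ (2 * lapQ σ)) := by
  obtain ⟨m, rfl⟩ : ∃ m, n = m + 1 := ⟨n - 1, by omega⟩
  have h := fdesPoly_eq_stirlingConvolution m
  simp only [fdesPoly, stirlingConvolution, fapPoly, lapPoly, sum_stirlingWords] at h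
  rw [h]
  refine Finset.sum_congr rfl fun k _ => ?_
  rw [Finset.sum_congr rfl fun σ hσ => congrArg (𝕏 ^ ·) (fapQ_eq hσ).symm,
    Finset.sum_congr rfl fun σ hσ => congrArg (fun i => 𝕏 ^ (2 * i)) (lapQ_eq hσ).symm]
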